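/- Let L be a directly irreducible modular ortholattice of finite dimension d ≥ 2. If some interval [0,a] of L of dimension 2 is finite, then L is finite. -/

import Mathlib

universe u

/-- An ortholattice: a bounded lattice with an order-reversing involution `x ↦ x′`
satisfying `x ⊓ x′ = ⊥` and `x ⊔ x′ = ⊤`. -/
class Ortholattice (α : Type*) extends Lattice α, BoundedOrder α where
  compl : α → α
  compl_antitone : ∀ x y : α, x ≤ y → compl y ≤ compl x
  compl_compl : ∀ x : α, compl (compl x) = x
  inf_compl : ∀ x : α, x ⊓ compl x = ⊥
  sup_compl : ∀ x : α, x ⊔ compl x = ⊤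

postfix:max "′" => Ortholattice.compl

/-- The direct product of two ortholattices. -/
instance Ortholattice.prod (α β : Type*) [Ortholattice α] [Ortholattice β] :
    Ortholattice (α × β) where
  compl p := (p.1′, p.2′)
  compl_antitone x y h := ⟨compl_antitone _ _ h.1, compl_antitone _ _ h.2⟩
  compl_compl x := by cases x; simp [compl_compl]
  inf_compl x := by cases x; rw [Prod.mk_inf_mk]; simp [inf_compl]; rfl
  sup_compl x := by cases x; rw [Prod.mk_sup_mk]; simp [sup_compl]; rfl

/-- An isomorphism of ortholattices: an order isomorphism commuting with
orthocomplementation. -/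
structure OLIso (α β : Type*) [Ortholattice α] [Ortholattice β] extends α ≃ β where
  map_rel : ∀ x y : α, x ≤ y ↔ toFun x ≤ toFun y
  map_compl : ∀ x : α, toFun x′ = (toFun x)′

/-- An ortholattice is directly irreducible if it is nontrivial and not isomorphic to a
direct product of two nontrivial ortholattices. -/
def DirectlyIrreducible (α : Type u) [Ortholattice α] : Prop :=
  Nontrivial α ∧ ∀ (β γ : Type u) [Ortholattice β] [Ortholattice γ],
    Nontrivial β → Nontrivial γ → IsEmpty (OLIso α (β × γ))

/-- A lattice has finite dimension `d` if some maximal chain has exactly `d + 1` elements. -/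
def HasDim (α : Type*) [Lattice α] (d : ℕ) : Prop :=
  ∃ s : Set α, IsMaxChain (· ≤ ·) s ∧ s.ncard = d + 1

/-! Any two atoms of a directly irreducible modular ortholattice with descending chain condition
are perspective: perspectivity of atoms is transitive, non-perspective atoms are orthogonal, so the
join of a perspectivity class is central. Replacing one atom of a line by a perspective one maps
the old line isomorphically onto the new one, so one finite line `[⊥, p ⊔ q]` makes all
lines finite. Finally, if `c = p ⊔ e` with `p` an atom and `e` disjoint from `p`, every other atom
below `c` lies on a line through `p` and an atom of `e`; by induction there are finitely many atoms,
and every element is determined by the atoms below it. -/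

open Set

section ChainCondition

variable {α : Type*} [Lattice α]

theorem wellFoundedLT_Iic_of_Icc [IsModularLattice α] {a b : α} (hab : a ≤ b)
    [WellFoundedLT (Iic a)] [WellFoundedLT (Icc a b)] : WellFoundedLT (Iic b) :=
  wellFounded_lt_exact_sequence (β := Iic a) (γ := Icc a b) ⟨a, hab⟩
    (fun x => ⟨x, x.2.trans hab⟩) (fun x => ⟨x ⊓ a, inf_le_right⟩)
    (fun x => ⟨x, x.2.2⟩) (fun x => ⟨x ⊔ a, le_sup_right, sup_le x.2 hab⟩)
    (GaloisConnection.toGaloisCoinsertion (fun x _ => (le_inf_iff.trans (and_iff_left x.2)).symm)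
      fun _ => inf_le_left)
    (GaloisConnection.toGaloisInsertion (fun _ y => sup_le_iff.trans (and_iff_left y.2.1))
      fun _ => le_sup_left)
    (fun _ => rfl) fun _ => rfl

theorem wellFoundedLT_Iic_of_mem_flag [OrderBot α] [IsModularLattice α] (s : Flag α) [Finite s]
    (c : s) : WellFoundedLT (Iic (c : α)) := by
  classical
  induction c using WellFoundedLT.induction with
  | ind c ih =>
    rcases eq_bot_or_bot_lt c with rfl | hc
    · have : Subsingleton (Iic ((⊥ : s) : α)) := by
        rw [show ((⊥ : s) : α) = ⊥ from rfl, Iic_bot]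
        infer_instance
      infer_instance
    obtain ⟨b, -, hbc⟩ := exists_le_covBy_of_lt hc
    have := ih b hbc.lt
    have : Finite (Icc (b : α) c) := by
      rw [(Flag.coe_covBy_coe.2 hbc).Icc_eq]
      infer_instance
    exact wellFoundedLT_Iic_of_Icc hbc.le

theorem HasDim.wellFoundedLT [BoundedOrder α] [IsModularLattice α] {d : ℕ} (h : HasDim α d) :
    WellFoundedLT α := by
  obtain ⟨s, hs, hcard⟩ := h
  let F := Flag.ofIsMaxChain s hs
  have : Finite F := (finite_of_ncard_ne_zero (s := s) (by lia)).to_subtype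
  have : WellFoundedLT (Iic (⊤ : α)) := wellFoundedLT_Iic_of_mem_flag F ⊤
  exact OrderIso.IicTop.symm.toOrderEmbedding.wellFoundedLT

theorem HasDim.nonempty_Ioo {a b : α} {d : ℕ} (h : HasDim (Icc a b) d) (hab : a ≤ b) (hd : 2 ≤ d) :
    (Ioo a b).Nonempty := by
  obtain ⟨s, -, hcard⟩ := h
  have hlt : ({⟨a, le_rfl, hab⟩, ⟨b, hab, le_rfl⟩} : Set (Icc a b)).ncard < s.ncard :=
    (ncard_insert_le _ _).trans_lt (by rw [ncard_singleton]; lia)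
  obtain ⟨x, -, hx⟩ := exists_mem_notMem_of_ncard_lt_ncard hlt
  simp only [mem_insert_iff, mem_singleton_iff, Subtype.ext_iff, not_or] at hx
  exact ⟨x, x.2.1.lt_of_ne' hx.1, x.2.2.lt_of_ne hx.2⟩

end ChainCondition

theorem exists_isLUB_of_wellFoundedLT {α : Type*} [SemilatticeInf α] [OrderTop α] [WellFoundedLT α]
    (s : Set α) : ∃ z, IsLUB s z := by
  obtain ⟨z, hz, hmin⟩ :=
    exists_minimal_of_wellFoundedLT (· ∈ upperBounds s) ⟨⊤, fun _ _ => le_top⟩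
  refine ⟨z, hz, fun w hw => ?_⟩
  have hzw : z ⊓ w ∈ upperBounds s := fun r hr => le_inf (hz hr) (hw hr)
  exact (hmin hzw inf_le_left).trans inf_le_right

theorem finite_of_finite_isAtom {α : Type*} [PartialOrder α] [OrderBot α] [IsAtomistic α]
    [Finite {p : α // IsAtom p}] : Finite α :=
  Finite.of_injective (fun x : α => {p : {p : α // IsAtom p} | p.1 ≤ x}) fun _ _ h =>
    eq_iff_atom_le_iff.2 fun p hp => Set.ext_iff.1 h ⟨p, hp⟩

section Modular

variable {α : Type*} [Lattice α]

theorem disjoint_of_le_sup_of_le [OrderBot α] [IsModularLattice α] {x y r t : α} (hyx : y ≤ x)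
    (hxr : Disjoint x r) (ht : t ≤ y ⊔ r) (hyt : Disjoint y t) : Disjoint x t := by
  have hx : x ⊓ (y ⊔ r) = y := by
    rw [inf_comm, sup_inf_assoc_of_le r hyx, hxr.symm.eq_bot, sup_bot_eq]
  refine disjoint_iff_inf_le.2 ((le_inf ?_ inf_le_right).trans hyt.le_bot)
  exact (inf_le_inf_left x ht).trans hx.le

/-- Perspectivity of two elements: they have a common complement `t` in some interval `[⊥, u]`,
here `u = x ⊔ t = y ⊔ t`. -/
def Perspective [OrderBot α] (x y : α) : Prop :=
  ∃ t, Disjoint x t ∧ Disjoint y t ∧ x ⊔ t = y ⊔ t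

namespace Perspective

variable [OrderBot α] {x y : α}

theorem refl (x : α) : Perspective x x :=
  ⟨⊥, disjoint_bot_right, disjoint_bot_right, rfl⟩

theorem symm (h : Perspective x y) : Perspective y x := by
  obtain ⟨t, hxt, hyt, h⟩ := h
  exact ⟨t, hyt, hxt, h.symm⟩

variable [IsModularLattice α]

theorem exists_le_sup (h : Perspective x y) :
    ∃ t ≤ x ⊔ y, Disjoint x t ∧ Disjoint y t ∧ x ⊔ t = y ⊔ t := by
  obtain ⟨t, hxt, hyt, h⟩ := h
  refine ⟨t ⊓ (x ⊔ y), inf_le_right, hxt.mono_right inf_le_left, hyt.mono_right inf_le_left, ?_⟩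
  rw [← sup_inf_assoc_of_le t le_sup_left, ← sup_inf_assoc_of_le t le_sup_right, h]

theorem sup_left {z : α} (h : Perspective x y) (hx : Disjoint (z ⊔ y) x)
    (hy : Disjoint (z ⊔ x) y) : Perspective (z ⊔ x) (z ⊔ y) := by
  obtain ⟨t, ht, hxt, hyt, h⟩ := h.exists_le_sup
  refine ⟨t, disjoint_of_le_sup_of_le le_sup_right hy ht hxt,
    disjoint_of_le_sup_of_le le_sup_right hx (sup_comm x y ▸ ht) hyt, ?_⟩
  rw [sup_assoc, sup_assoc, h]

theorem finite_Iic (h : Perspective x y) (hx : (Iic x).Finite) : (Iic y).Finite := by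
  obtain ⟨t, hxt, hyt, h⟩ := h
  have ex := (infIccOrderIsoIccSup x t).toEquiv
  have ey := (infIccOrderIsoIccSup y t).toEquiv
  rw [hxt.eq_bot, Icc_bot, h] at ex
  rw [hyt.eq_bot, Icc_bot] at ey
  have := hx.to_subtype
  exact Set.finite_coe_iff.1 (Finite.of_equiv _ (ex.trans ey.symm))

end Perspective

section Atom

variable [OrderBot α] {p q r s x y : α}

section UpperModular

variable [IsUpperModularLattice α]

theorem covBy_sup_of_isAtom (hp : IsAtom p) (hpx : ¬ p ≤ x) : x ⋖ x ⊔ p := by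
  apply covBy_sup_of_inf_covBy_right
  rw [inf_comm, (hp.not_le_iff_disjoint.1 hpx).eq_bot]
  exact hp.bot_covBy

theorem sup_eq_sup_of_isAtom (hp : IsAtom p) (hy : y ≤ x ⊔ p) (hyx : ¬ y ≤ x) : x ⊔ y = x ⊔ p := by
  have hpx : ¬ p ≤ x := fun hpx => hyx (hy.trans (sup_le le_rfl hpx))
  exact ((covBy_sup_of_isAtom hp hpx).eq_or_eq le_sup_left (sup_le le_sup_left hy)).resolve_left
    (left_lt_sup.2 hyx).ne'

end UpperModular

variable [IsModularLattice α]

theorem Perspective.trans_of_isAtom (hp : IsAtom p) (hq : IsAtom q) (hr : IsAtom r)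
    (hpq : Perspective p q) (hqr : Perspective q r) : Perspective p r := by
  rcases eq_or_ne p q with rfl | hne_pq
  · exact hqr
  rcases eq_or_ne r q with rfl | hne_rq
  · exact hpq
  by_cases hcol : r ≤ q ⊔ p
  · have hrq : ¬ r ≤ q := fun h => hne_rq ((hq.le_iff_eq hr.ne_bot).1 h)
    refine ⟨q, hp.disjoint_of_ne hq hne_pq, hr.disjoint_of_ne hq hne_rq, ?_⟩
    rw [sup_comm p, sup_comm r, sup_eq_sup_of_isAtom hp hcol hrq]
  obtain ⟨u, hu, hpu, -, hu_eq⟩ := hpq.exists_le_sup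
  obtain ⟨v, hv, hqv, -, hv_eq⟩ := hqr.exists_le_sup
  have hv_disj : Disjoint (q ⊔ p) v :=
    disjoint_of_le_sup_of_le le_sup_left (hr.not_le_iff_disjoint.1 hcol).symm hv hqv
  have h_eq : p ⊔ (u ⊔ v) = r ⊔ (u ⊔ v) := by
    rw [← sup_assoc, hu_eq, sup_right_comm, hv_eq, sup_assoc, sup_comm v]
  have hp_disj : Disjoint p (u ⊔ v) :=
    hpu.disjoint_sup_right_of_disjoint_sup_left
      (hv_disj.mono_left (sup_le le_sup_right (sup_comm p q ▸ hu)))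
  refine ⟨u ⊔ v, hp_disj, hr.not_le_iff_disjoint.1 fun hle => ?_, h_eq⟩
  have hp_le : p ≤ u ⊔ v := le_sup_left.trans (h_eq.trans (sup_eq_right.2 hle)).le
  exact hp.not_le_iff_disjoint.2 hp_disj hp_le

theorem Perspective.finite_Iic_sup (h : Perspective q r) (hq : IsAtom q) (hr : IsAtom r)
    (hqx : ¬ q ≤ x) (hfin : (Iic (x ⊔ q)).Finite) : (Iic (x ⊔ r)).Finite := by
  by_cases hrq : r ≤ x ⊔ q
  · exact hfin.subset (Iic_subset_Iic.2 (sup_le le_sup_left hrq))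
  have hqr : ¬ q ≤ x ⊔ r := fun hqr =>
    hrq (le_sup_right.trans (sup_eq_sup_of_isAtom hr hqr hqx).ge)
  exact (h.sup_left (hq.not_le_iff_disjoint.1 hqr).symm
    (hr.not_le_iff_disjoint.1 hrq).symm).finite_Iic hfin

theorem finite_Iic_sup_of_forall_perspective
    (hpersp : ∀ {r s : α}, IsAtom r → IsAtom s → Perspective r s)
    (hp : IsAtom p) (hq : IsAtom q) (hqp : ¬ q ≤ p) (hfin : (Iic (p ⊔ q)).Finite)
    (hr : IsAtom r) (hs : IsAtom s) : (Iic (r ⊔ s)).Finite := by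
  have hp_line : ∀ {t : α}, IsAtom t → (Iic (p ⊔ t)).Finite := fun ht =>
    (hpersp hq ht).finite_Iic_sup hq ht hqp hfin
  by_cases hpr : p ≤ r
  · rw [← (hr.le_iff_eq hp.ne_bot).1 hpr]
    exact hp_line hs
  · exact (hpersp hp hs).finite_Iic_sup hp hs hpr (sup_comm p r ▸ hp_line hr)

theorem exists_isAtom_le_of_le_sup {e : α} (hq : IsAtom q) (hqp : ¬ q ≤ p)
    (hpe : Disjoint p e) (hqe : q ≤ p ⊔ e) : ∃ r ≤ e, IsAtom r ∧ q ≤ p ⊔ r := by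
  have hsup : p ⊔ e ⊓ (p ⊔ q) = p ⊔ q := by
    rw [← sup_inf_assoc_of_le e le_sup_left, inf_eq_right.2 (sup_le le_sup_left hqe)]
  refine ⟨e ⊓ (p ⊔ q), inf_le_left, ?_, le_sup_right.trans hsup.ge⟩
  have hcov : p ⊓ (e ⊓ (p ⊔ q)) ⋖ e ⊓ (p ⊔ q) :=
    inf_covBy_of_covBy_sup_left (hsup.symm ▸ covBy_sup_of_isAtom hq hqp)
  rwa [(hpe.mono_right inf_le_left).eq_bot, bot_covBy_iff] at hcov

end Atom

section Complemented

variable [BoundedOrder α]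

theorem isAtomistic_of_isAtomic [IsModularLattice α] [ComplementedLattice α] [IsAtomic α] :
    IsAtomistic α where
  isLUB_atoms b := by
    refine ⟨{p | IsAtom p ∧ p ≤ b}, ⟨fun p hp => hp.2, fun w hw => ?_⟩, fun p hp => hp.1⟩
    have hle : w ⊓ b ≤ b := inf_le_right
    obtain ⟨e, hdisj, hsup⟩ := IsModularLattice.exists_disjoint_and_sup_eq hle
    rcases eq_bot_or_exists_atom_le e with rfl | ⟨p, hp, hpe⟩
    · rw [← hsup, sup_bot_eq]
      exact inf_le_left
    · have hpb : p ≤ b := hpe.trans (le_sup_right.trans hsup.le)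
      exact absurd (hdisj (le_inf (hw ⟨hp, hpb⟩) hpb) hpe) hp.bot_lt.not_ge

theorem finite_setOf_isAtom_le [IsModularLattice α] [ComplementedLattice α] [WellFoundedLT α]
    (hline : ∀ {p q : α}, IsAtom p → IsAtom q → (Iic (p ⊔ q)).Finite) (c : α) :
    {q : α | IsAtom q ∧ q ≤ c}.Finite := by
  induction c using WellFoundedLT.induction with
  | ind c ih =>
    rcases eq_bot_or_exists_atom_le c with rfl | ⟨p, hp, hpc⟩
    · exact finite_empty.subset fun q hq => hq.1.bot_lt.not_ge hq.2
    obtain ⟨e, hpe, rfl⟩ := IsModularLattice.exists_disjoint_and_sup_eq hpc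
    have he : e < p ⊔ e := right_lt_sup.2 (hp.not_le_iff_disjoint.2 hpe)
    refine ((finite_singleton p).union
      ((ih e he).biUnion fun r hr => hline hp hr.1)).subset ?_
    rintro q ⟨hq, hqe⟩
    by_cases hqp : q ≤ p
    · exact Or.inl ((hp.le_iff_eq hq.ne_bot).1 hqp)
    · obtain ⟨r, hre, hr, hqr⟩ := exists_isAtom_le_of_le_sup hq hqp hpe hqe
      exact Or.inr (mem_biUnion (x := r) ⟨hr, hre⟩ hqr)

end Complemented

end Modular

namespace Ortholattice

variable {α : Type*} [Ortholattice α] {x y z p q : α}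

theorem disjoint_compl (x : α) : Disjoint x x′ :=
  disjoint_iff.2 (inf_compl x)

instance : ComplementedLattice α where
  exists_isCompl x := ⟨x′, disjoint_compl x, codisjoint_iff.2 (sup_compl x)⟩

theorem le_compl_comm : x ≤ y′ ↔ y ≤ x′ :=
  ⟨fun h => (compl_compl y).ge.trans (compl_antitone _ _ h),
    fun h => (compl_compl x).ge.trans (compl_antitone _ _ h)⟩

theorem compl_le_comm : x′ ≤ y ↔ y′ ≤ x :=
  ⟨fun h => (compl_antitone _ _ h).trans (compl_compl x).le,
    fun h => (compl_antitone _ _ h).trans (compl_compl y).le⟩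

theorem compl_inf (x y : α) : (x ⊓ y)′ = x′ ⊔ y′ :=
  le_antisymm
    (compl_le_comm.1 (le_inf (compl_le_comm.1 le_sup_left) (compl_le_comm.1 le_sup_right)))
    (sup_le (compl_antitone _ _ inf_le_left) (compl_antitone _ _ inf_le_right))

/-- An element `z` is central if it splits every element along `z` and `z′`; central elements
correspond to decompositions of the ortholattice into a direct product. -/
def IsCentral (z : α) : Prop :=
  ∀ x : α, x ⊓ z ⊔ x ⊓ z′ = x

theorem isCentral_of_forall_isAtom [IsAtomistic α] (h : ∀ s : α, IsAtom s → s ≤ z ∨ s ≤ z′) :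
    IsCentral z := fun _ =>
  le_antisymm (sup_le inf_le_left inf_le_left) <| le_iff_atom_le_imp.2 fun s hs hsx =>
    (h s hs).elim (fun hsz => le_sup_of_le_left (le_inf hsx hsz))
      fun hsz => le_sup_of_le_right (le_inf hsx hsz)

theorem IsCentral.compl (hz : IsCentral z) : IsCentral z′ := fun x => by
  rw [compl_compl, sup_comm, hz x]

variable [IsModularLattice α]

/-- The interval `[⊥, z]` of a modular ortholattice as an ortholattice, with the relative
orthocomplement `x′ ⊓ z`. -/
instance iic (z : α) : Ortholattice (Iic z) where
  compl x := ⟨x.1′ ⊓ z, inf_le_right⟩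
  compl_antitone _ _ h := inf_le_inf_right z (compl_antitone _ _ h)
  compl_compl x := Subtype.ext <| show (x.1′ ⊓ z)′ ⊓ z = x.1 by
    rw [compl_inf, compl_compl, sup_inf_assoc_of_le _ x.2, (disjoint_compl z).symm.eq_bot,
      sup_bot_eq]
  inf_compl x := Subtype.ext <|
    ((disjoint_compl x.1).mono_right inf_le_left).eq_bot
  sup_compl x := Subtype.ext <| show x.1 ⊔ x.1′ ⊓ z = z by
    rw [← sup_inf_assoc_of_le _ x.2, sup_compl, top_inf_eq]

theorem sup_inf_eq_left_of_le_compl (hx : x ≤ z) (hy : y ≤ z′) : (x ⊔ y) ⊓ z = x := by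
  rw [sup_inf_assoc_of_le y hx, ((disjoint_compl z).symm.mono_left hy).eq_bot, sup_bot_eq]

theorem IsCentral.compl_inf_inf (hz : IsCentral z) (x : α) : (x ⊓ z)′ ⊓ z = x′ ⊓ z := by
  have hsup : (x ⊓ z)′ = x′ ⊓ z ⊔ z′ := by
    conv_lhs => rw [compl_inf, ← hz x′, sup_assoc, sup_eq_right.2 (inf_le_right : x′ ⊓ z′ ≤ z′)]
  rw [hsup, sup_inf_eq_left_of_le_compl inf_le_right le_rfl]

/-- The decomposition of a modular ortholattice as a direct product given by a central element. -/
def IsCentral.decomposition (hz : IsCentral z) : OLIso α (Iic z × Iic z′) where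
  toFun x := (⟨x ⊓ z, inf_le_right⟩, ⟨x ⊓ z′, inf_le_right⟩)
  invFun y := y.1.1 ⊔ y.2.1
  left_inv := hz
  right_inv := fun ⟨⟨x, hx⟩, ⟨y, hy⟩⟩ => Prod.ext
    (Subtype.ext (sup_inf_eq_left_of_le_compl hx hy))
    (Subtype.ext ((congrArg (· ⊓ z′) (sup_comm x y)).trans
      (sup_inf_eq_left_of_le_compl hy ((compl_compl z).ge.trans' hx))))
  map_rel x y := ⟨fun h => ⟨inf_le_inf_right z h, inf_le_inf_right z′ h⟩, fun h =>
    calc x = x ⊓ z ⊔ x ⊓ z′ := (hz x).symm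
      _ ≤ y ⊓ z ⊔ y ⊓ z′ := sup_le_sup h.1 h.2
      _ = y := hz y⟩
  map_compl x := Prod.ext (Subtype.ext (hz.compl_inf_inf x).symm)
    (Subtype.ext (hz.compl.compl_inf_inf x).symm)

theorem perspective_of_not_le_compl (hp : IsAtom p) (hq : IsAtom q) (h : ¬ q ≤ p′) :
    Perspective p q := by
  have hsup : p′ ⊔ q = p′ ⊔ p :=
    sup_eq_sup_of_isAtom hp (by rw [sup_comm, sup_compl]; exact le_top) h
  exact ⟨p′, disjoint_compl p, hq.not_le_iff_disjoint.1 h, by rw [sup_comm, ← hsup, sup_comm]⟩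

theorem le_compl_of_isLUB_perspective {s : α} (hp : IsAtom p) (hs : IsAtom s)
    (hps : ¬ Perspective p s) (hz : IsLUB {r | IsAtom r ∧ Perspective p r} z) : s ≤ z′ := by
  refine le_compl_comm.1 (hz.2 fun r ⟨hr, hpr⟩ => ?_)
  by_contra hrs
  exact hps (hpr.trans_of_isAtom hp hr hs (perspective_of_not_le_compl hs hr hrs).symm)

theorem isCentral_of_isLUB_perspective [IsAtomistic α] (hp : IsAtom p)
    (hz : IsLUB {r | IsAtom r ∧ Perspective p r} z) : IsCentral z :=
  isCentral_of_forall_isAtom fun _ hs => or_iff_not_imp_right.2 fun hsz =>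
    hz.1 ⟨hs, not_not.1 fun hps => hsz (le_compl_of_isLUB_perspective hp hs hps hz)⟩

end Ortholattice

namespace DirectlyIrreducible

open Ortholattice

variable {α : Type u} [Ortholattice α] [IsModularLattice α]

theorem eq_bot_or_compl_eq_bot (hirr : DirectlyIrreducible α) {z : α} (hz : IsCentral z) :
    z = ⊥ ∨ z′ = ⊥ := by
  by_contra! hne
  have hnt : ∀ {w : α}, w ≠ ⊥ → Nontrivial (Iic w) := fun hw =>
    nontrivial_of_ne ⊤ ⊥ (Subtype.coe_ne_coe.1 hw)
  exact (hirr.2 (Iic z) (Iic z′) (hnt hne.1) (hnt hne.2)).false hz.decomposition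

theorem perspective_of_isAtom [WellFoundedLT α] (hirr : DirectlyIrreducible α) {p q : α}
    (hp : IsAtom p) (hq : IsAtom q) : Perspective p q := by
  have : IsAtomistic α := isAtomistic_of_isAtomic
  obtain ⟨z, hz⟩ := exists_isLUB_of_wellFoundedLT {r | IsAtom r ∧ Perspective p r}
  have hpz : p ≤ z := hz.1 ⟨hp, Perspective.refl p⟩
  by_contra hpq
  have hqz : q ≤ z′ := le_compl_of_isLUB_perspective hp hq hpq hz
  rcases hirr.eq_bot_or_compl_eq_bot (isCentral_of_isLUB_perspective hp hz) with h | h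
  · exact hp.bot_lt.not_ge (h ▸ hpz)
  · exact hq.bot_lt.not_ge (h ▸ hqz)

end DirectlyIrreducible

theorem stmt10_general {α : Type u} [Ortholattice α] [IsModularLattice α] [WellFoundedLT α]
    (hirr : DirectlyIrreducible α) {a : α} (ha : (Ioo ⊥ a).Nonempty) (hfin : (Icc ⊥ a).Finite) :
    Finite α := by
  have : IsAtomistic α := isAtomistic_of_isAtomic
  obtain ⟨b, hb, hba⟩ := ha
  obtain ⟨p, hp, hpb⟩ := (eq_bot_or_exists_atom_le b).resolve_left hb.ne'
  obtain ⟨q, hq, hqa, hqb⟩ : ∃ q, IsAtom q ∧ q ≤ a ∧ ¬ q ≤ b := by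
    by_contra! hle
    exact hba.not_ge (le_iff_atom_le_imp.2 hle)
  have hpq : (Iic (p ⊔ q)).Finite :=
    hfin.subset fun x hx => ⟨bot_le, hx.trans (sup_le (hpb.trans hba.le) hqa)⟩
  have hline : ∀ {r s : α}, IsAtom r → IsAtom s → (Iic (r ⊔ s)).Finite :=
    finite_Iic_sup_of_forall_perspective hirr.perspective_of_isAtom hp hq
      (fun hqp => hqb (hqp.trans hpb)) hpq
  have : Finite {r : α // IsAtom r} :=
    ((finite_setOf_isAtom_le hline ⊤).subset fun r hr => ⟨hr, le_top⟩).to_subtype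
  exact finite_of_finite_isAtom

/-- Let `L` be a directly irreducible modular ortholattice of finite dimension `d ≥ 2`.
If some interval `[⊥, a]` of `L` of dimension `2` is finite, then `L` is finite. -/
theorem stmt10 (α : Type u) [Ortholattice α] [IsModularLattice α]
    (hirr : DirectlyIrreducible α) (d : ℕ) (hd : 2 ≤ d) (hdim : HasDim α d)
    (a : α) (ha2 : HasDim (Set.Icc (⊥ : α) a) 2) (hfin : (Set.Icc (⊥ : α) a).Finite) :
    Finite α := by
  have := hdim.wellFoundedLT
  exact stmt10_general hirr (ha2.nonempty_Ioo bot_le le_rfl) hfin
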